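/- Let a, r, δ, ζ, Υ, λ, α > 0 be real, let f_{a,r}(y) = r^a y^{a−1} e^{−r y}/Γ(a) for y ≥ 0 (and 0 for y < 0) be the Gamma probability density with shape a and rate r, let γ(c, z) = ∫_0^z t^{c−1} e^{−t} dt be the lower incomplete gamma function, and for ρ > 0 set c(ρ) = (1/ζ)·√(Υ·λ/(ρ·α)). Then lim_{ρ→∞} [∫_0^∞ f_{a,r}(y) · (γ(δ, c(ρ)·√y)/Γ(δ)) dy] / [(Γ(a + δ/2)/(δ·Γ(δ)·Γ(a)·r^{δ/2})) · c(ρ)^δ] = 1. -/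

import Mathlib

/-! Write `φ z = γ(δ, z) / z ^ δ`. Then `γ(δ, c √y) = c ^ δ * y ^ (δ / 2) * φ (c √y)`, so dividing
the integral by `c ^ δ` leaves `∫ f_{a,r}(y) y ^ (δ / 2) φ (c √y) dy`. Since `exp (-t)` lies between
`exp (-z)` and `1` on `[0, z]`, the function `φ` is bounded by `1 / δ` on `(0, ∞)` and tends to
`1 / δ` at `0`. Dominated convergence as `c → 0⁺` gives `1 / δ` times the moment of order `δ / 2`
of the Gamma density. -/

open Filter

/-- The Gamma probability density with shape `a` and rate `r`:
`f_{a,r}(x) = r^a x^(a-1) e^(-r x) / Γ(a)` for `x ≥ 0`, and `0` for `x < 0`. -/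
noncomputable def gammaPdf (a r x : ℝ) : ℝ :=
  if 0 ≤ x then r ^ a * x ^ (a - 1) * Real.exp (-(r * x)) / Real.Gamma a else 0

/-- The lower incomplete gamma function `γ(c, z) = ∫_0^z t^(c-1) e^(-t) dt`. -/
noncomputable def lowerIncGamma (c z : ℝ) : ℝ :=
  ∫ t in (0 : ℝ)..z, t ^ (c - 1) * Real.exp (-t)

section

open MeasureTheory Set
open scoped Topology

theorem tendsto_integral_mul_comp_const_mul_nhdsGT_zero {X : Type*} [MeasurableSpace X]
    {μ : Measure X} {f h : X → ℝ} {φ : ℝ → ℝ} {B L : ℝ} (hf : Integrable f μ)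
    (hh : AEMeasurable h μ) (hh_pos : ∀ᵐ x ∂μ, 0 < h x) (hφ : Measurable φ)
    (hφ_bound : ∀ z, 0 < z → |φ z| ≤ B) (hφ_lim : Tendsto φ (𝓝[>] 0) (𝓝 L)) :
    Tendsto (fun c => ∫ x, f x * φ (c * h x) ∂μ) (𝓝[>] 0) (𝓝 ((∫ x, f x ∂μ) * L)) := by
  rw [← integral_mul_const]
  refine tendsto_integral_filter_of_dominated_convergence (fun x => |f x| * B) ?_ ?_
    (hf.abs.mul_const B) ?_
  · exact .of_forall fun c =>
      hf.aestronglyMeasurable.mul (hφ.comp_aemeasurable (hh.const_mul c)).aestronglyMeasurable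
  · filter_upwards [self_mem_nhdsWithin] with c (hc : 0 < c)
    filter_upwards [hh_pos] with x hx
    rw [Real.norm_eq_abs, abs_mul]
    exact mul_le_mul_of_nonneg_left (hφ_bound _ (mul_pos hc hx)) (abs_nonneg _)
  · filter_upwards [hh_pos] with x hx
    have h_arg : Tendsto (fun c => c * h x) (𝓝[>] 0) (𝓝[>] 0) := by
      simpa using TendstoNhdsWithinIoi.mul_const hx (tendsto_id (x := 𝓝[>] (0 : ℝ)))
    exact (hφ_lim.comp h_arg).const_mul (f x)

theorem integral_rpow_sub_one {c : ℝ} (hc : 0 < c) (z : ℝ) :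
    ∫ t in (0 : ℝ)..z, t ^ (c - 1) = z ^ c / c := by
  rw [integral_rpow (Or.inl (by linarith)), sub_add_cancel, Real.zero_rpow hc.ne', sub_zero]

theorem intervalIntegrable_rpow_sub_one_mul_exp_neg {c : ℝ} (hc : 0 < c) (u v : ℝ) :
    IntervalIntegrable (fun t : ℝ => t ^ (c - 1) * Real.exp (-t)) volume u v :=
  (intervalIntegral.intervalIntegrable_rpow' (by linarith)).mul_continuousOn (by fun_prop)

theorem continuous_lowerIncGamma {c : ℝ} (hc : 0 < c) : Continuous (lowerIncGamma c) :=
  intervalIntegral.continuous_primitive (intervalIntegrable_rpow_sub_one_mul_exp_neg hc) 0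

theorem lowerIncGamma_le {c z : ℝ} (hc : 0 < c) (hz : 0 ≤ z) : lowerIncGamma c z ≤ z ^ c / c := by
  rw [← integral_rpow_sub_one hc]
  refine intervalIntegral.integral_mono_on hz
    (intervalIntegrable_rpow_sub_one_mul_exp_neg hc 0 z)
    (intervalIntegral.intervalIntegrable_rpow' (by linarith)) fun t ht => ?_
  exact mul_le_of_le_one_right (Real.rpow_nonneg ht.1 _)
    (Real.exp_le_one_iff.2 (neg_nonpos.2 ht.1))

theorem exp_neg_mul_le_lowerIncGamma {c z : ℝ} (hc : 0 < c) (hz : 0 ≤ z) :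
    Real.exp (-z) * (z ^ c / c) ≤ lowerIncGamma c z := by
  rw [← integral_rpow_sub_one hc, mul_comm, ← intervalIntegral.integral_mul_const]
  refine intervalIntegral.integral_mono_on hz
    ((intervalIntegral.intervalIntegrable_rpow' (by linarith)).mul_const _)
    (intervalIntegrable_rpow_sub_one_mul_exp_neg hc 0 z) fun t ht => ?_
  exact mul_le_mul_of_nonneg_left (Real.exp_le_exp.2 (neg_le_neg ht.2))
    (Real.rpow_nonneg ht.1 _)

theorem lowerIncGamma_div_rpow_mem_Icc {c z : ℝ} (hc : 0 < c) (hz : 0 < z) :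
    lowerIncGamma c z / z ^ c ∈ Icc (Real.exp (-z) * c⁻¹) c⁻¹ := by
  have hzc : 0 < z ^ c := Real.rpow_pos_of_pos hz c
  constructor
  · rw [le_div_iff₀ hzc, mul_assoc, inv_mul_eq_div]
    exact exp_neg_mul_le_lowerIncGamma hc hz.le
  · rw [div_le_iff₀ hzc, inv_mul_eq_div]
    exact lowerIncGamma_le hc hz.le

theorem tendsto_lowerIncGamma_div_rpow_nhdsGT_zero {c : ℝ} (hc : 0 < c) :
    Tendsto (fun z => lowerIncGamma c z / z ^ c) (𝓝[>] 0) (𝓝 c⁻¹) := by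
  have h_lower : Tendsto (fun z => Real.exp (-z) * c⁻¹) (𝓝[>] 0) (𝓝 c⁻¹) := by
    have h_cont : Continuous fun z => Real.exp (-z) * c⁻¹ := by fun_prop
    simpa using (h_cont.tendsto 0).mono_left nhdsWithin_le_nhds
  refine tendsto_of_tendsto_of_tendsto_of_le_of_le' h_lower tendsto_const_nhds ?_ ?_
  · filter_upwards [self_mem_nhdsWithin] with z hz using (lowerIncGamma_div_rpow_mem_Icc hc hz).1
  · filter_upwards [self_mem_nhdsWithin] with z hz using (lowerIncGamma_div_rpow_mem_Icc hc hz).2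

theorem eqOn_gammaPdf_mul_rpow (a r s : ℝ) :
    EqOn (fun y => gammaPdf a r y * y ^ s)
      (fun y => r ^ a / Real.Gamma a * (y ^ (a + s - 1) * Real.exp (-(r * y)))) (Ioi 0) := by
  intro y (hy : 0 < y)
  simp only [gammaPdf, if_pos hy.le, add_sub_right_comm, Real.rpow_add hy]
  ring

theorem integrableOn_gammaPdf_mul_rpow {a r s : ℝ} (has : 0 < a + s) (hr : 0 < r) :
    IntegrableOn (fun y => gammaPdf a r y * y ^ s) (Ioi 0) := by
  rw [integrableOn_congr_fun (eqOn_gammaPdf_mul_rpow a r s) measurableSet_Ioi]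
  have h_int : IntegrableOn (fun y : ℝ => y ^ (a + s - 1) * Real.exp (-(r * y))) (Ioi 0) := by
    simpa using integrableOn_rpow_mul_exp_neg_mul_rpow (s := a + s - 1) (by linarith) one_pos hr
  exact h_int.const_mul _

theorem integral_gammaPdf_mul_rpow {a r s : ℝ} (has : 0 < a + s) (hr : 0 < r) :
    ∫ y in Ioi (0 : ℝ), gammaPdf a r y * y ^ s
      = Real.Gamma (a + s) / (Real.Gamma a * r ^ s) := by
  rw [setIntegral_congr_fun measurableSet_Ioi (eqOn_gammaPdf_mul_rpow a r s),
    integral_const_mul, Real.integral_rpow_mul_exp_neg_mul_Ioi has hr, one_div,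
    Real.inv_rpow hr.le, Real.rpow_add hr]
  field_simp

theorem mul_sqrt_rpow {c y : ℝ} (hc : 0 ≤ c) (hy : 0 ≤ y) (δ : ℝ) :
    (c * √y) ^ δ = c ^ δ * y ^ (δ / 2) := by
  rw [Real.mul_rpow hc (Real.sqrt_nonneg y), Real.sqrt_eq_rpow, ← Real.rpow_mul hy,
    one_div_mul_eq_div]

theorem integral_gammaPdf_mul_lowerIncGamma_div_rpow {c : ℝ} (hc : 0 < c) (a r δ : ℝ) :
    (∫ y in Ioi (0 : ℝ), gammaPdf a r y * lowerIncGamma δ (c * √y)) / c ^ δ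
      = ∫ y in Ioi (0 : ℝ), gammaPdf a r y * y ^ (δ / 2)
          * (lowerIncGamma δ (c * √y) / (c * √y) ^ δ) := by
  rw [← integral_div]
  refine setIntegral_congr_fun measurableSet_Ioi fun y (hy : 0 < y) => ?_
  simp only [mul_sqrt_rpow hc.le hy.le]
  field_simp

theorem tendsto_integral_gammaPdf_mul_lowerIncGamma_div_rpow {a r δ : ℝ} (haδ : 0 < a + δ / 2)
    (hr : 0 < r) (hδ : 0 < δ) :
    Tendsto (fun c => (∫ y in Ioi (0 : ℝ), gammaPdf a r y * lowerIncGamma δ (c * √y)) / c ^ δ)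
      (𝓝[>] 0) (𝓝 (Real.Gamma (a + δ / 2) / (Real.Gamma a * r ^ (δ / 2)) * δ⁻¹)) := by
  have h_meas : Measurable fun z => lowerIncGamma δ z / z ^ δ :=
    (continuous_lowerIncGamma hδ).measurable.div (by fun_prop)
  have h_bound (z : ℝ) (hz : 0 < z) : |lowerIncGamma δ z / z ^ δ| ≤ δ⁻¹ := by
    obtain ⟨h_lower, h_upper⟩ := lowerIncGamma_div_rpow_mem_Icc hδ hz
    rwa [abs_of_nonneg (le_trans (by positivity) h_lower)]
  rw [← integral_gammaPdf_mul_rpow haδ hr]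
  refine (tendsto_integral_mul_comp_const_mul_nhdsGT_zero
    (integrableOn_gammaPdf_mul_rpow haδ hr) Real.continuous_sqrt.aemeasurable
    ?_ h_meas h_bound (tendsto_lowerIncGamma_div_rpow_nhdsGT_zero hδ)).congr' ?_
  · filter_upwards [ae_restrict_mem measurableSet_Ioi] with y hy using Real.sqrt_pos.2 hy
  · filter_upwards [self_mem_nhdsWithin] with c hc
    exact (integral_gammaPdf_mul_lowerIncGamma_div_rpow hc a r δ).symm

theorem xi1_asymptotic_general {a r δ : ℝ} (haδ : 0 < a + δ / 2) (hΓa : Real.Gamma a ≠ 0)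
    (hr : 0 < r) (hδ : 0 < δ) :
    Tendsto (fun c : ℝ =>
        (∫ y in Ioi (0 : ℝ), gammaPdf a r y
            * (lowerIncGamma δ (c * √y) / Real.Gamma δ))
          / ((Real.Gamma (a + δ / 2) / (δ * Real.Gamma δ * Real.Gamma a * r ^ (δ / 2))) * c ^ δ))
      (𝓝[>] 0) (𝓝 1) := by
  have hΓδ := (Real.Gamma_pos_of_pos hδ).ne'
  have h_ne : Real.Gamma (a + δ / 2) / (Real.Gamma a * r ^ (δ / 2)) * δ⁻¹ ≠ 0 := by
    have := Real.Gamma_pos_of_pos haδ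
    positivity
  have h_lim := (tendsto_integral_gammaPdf_mul_lowerIncGamma_div_rpow haδ hr hδ).div_const
    (Real.Gamma (a + δ / 2) / (Real.Gamma a * r ^ (δ / 2)) * δ⁻¹)
  rw [div_self h_ne] at h_lim
  refine h_lim.congr fun c => ?_
  simp only [← mul_div_assoc, integral_div]
  field_simp

theorem tendsto_const_mul_sqrt_div_mul_atTop {b κ α : ℝ} (hb : 0 < b) (hκ : 0 < κ) (hα : 0 < α) :
    Tendsto (fun ρ : ℝ => b * √(κ / (ρ * α))) atTop (𝓝[>] 0) := by
  refine tendsto_nhdsWithin_iff.2 ⟨?_, ?_⟩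
  · have h_zero : Tendsto (fun ρ : ℝ => κ / (ρ * α)) atTop (𝓝 0) :=
      (tendsto_id.atTop_mul_const hα).const_div_atTop κ
    simpa using h_zero.sqrt.const_mul b
  · filter_upwards [eventually_gt_atTop 0] with ρ hρ
    exact mul_pos hb (Real.sqrt_pos.2 (div_pos hκ (mul_pos hρ hα)))

end

/-- Lemma 3 as an exact asymptotic equivalence: with `c(ρ) = (1/ζ)√(Υλ/(ρα))`, the term
`ξ₁(ρ) = ∫_0^∞ f_{a,r}(y) γ(δ, c(ρ)√y)/Γ(δ) dy` is asymptotically equal, as `ρ → ∞`, to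
`ξ₁^∞(ρ) = (Γ(a + δ/2)/(δ Γ(δ) Γ(a) r^(δ/2))) c(ρ)^δ` (Eq. (11)). -/
theorem xi1_asymptotic (a r δ ζ Υ lam α : ℝ)
    (ha : 0 < a) (hr : 0 < r) (hδ : 0 < δ) (hζ : 0 < ζ)
    (hΥ : 0 < Υ) (hlam : 0 < lam) (hα : 0 < α) :
    Tendsto (fun ρ : ℝ =>
        (∫ y in Set.Ioi (0 : ℝ), gammaPdf a r y
            * (lowerIncGamma δ (((1 / ζ) * Real.sqrt (Υ * lam / (ρ * α))) * Real.sqrt y)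
                / Real.Gamma δ))
          / ((Real.Gamma (a + δ / 2) / (δ * Real.Gamma δ * Real.Gamma a * r ^ (δ / 2)))
              * ((1 / ζ) * Real.sqrt (Υ * lam / (ρ * α))) ^ δ))
      atTop (nhds 1) :=
  (xi1_asymptotic_general (by positivity) (Real.Gamma_pos_of_pos ha).ne' hr hδ).comp
    (tendsto_const_mul_sqrt_div_mul_atTop (one_div_pos.2 hζ) (mul_pos hΥ hlam) hα)
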